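/- Let G and H be finite groups, let N be a normal subgroup of G and G₁ ≤ G a subgroup such that G is the internal semidirect product N ⋊ G₁ (i.e., N ∩ G₁ = {1} and N·G₁ = G), and suppose the only group homomorphism from G₁ to H is trivial (|Hom(G₁,H)| = 1). Then Λ_{G,H} ≤ Λ_{N,H}. -/

import Mathlib

/-!
The hypothesis on `G₁` makes every homomorphism `G →* H` trivial on `G₁`, so an affine homomorphism
`φ : G → H` satisfies `φ (x * y) = φ x` for `x ∈ N`, `y ∈ G₁`. Since multiplication is a bijection
`N × G₁ → G`, the agreement set of two affine homomorphisms of `G` is the product of the agreement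
set of their restrictions to `N` with `G₁`. Restriction to `N` therefore preserves agreement
(`agr_eq_of_prod`) and is injective, so each value entering `Λ_{G,H}` also enters `Λ_{N,H}`.
-/

open scoped BigOperators

/-- The fractional agreement between two functions. -/
noncomputable def agr {G H : Type*} (f g : G → H) : ℝ :=
  (Nat.card {x : G // f x = g x} : ℝ) / (Nat.card G : ℝ)

/-- A (left) affine homomorphism between groups. -/
def IsAffineHom {G H : Type*} [Group G] [Group H] (φ : G → H) : Prop :=
  ∃ (h : H) (φ₀ : G →* H), ∀ g, φ g = h * φ₀ g

/-- `Λ_{G,H}`: the maximum agreement between distinct affine homomorphisms,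
with the convention that it is `0` if there are at most one of them. -/
noncomputable def Lambda (G H : Type*) [Group G] [Group H] : ℝ :=
  sSup (insert (0 : ℝ)
    {a : ℝ | ∃ φ ψ : G → H, IsAffineHom φ ∧ IsAffineHom ψ ∧ φ ≠ ψ ∧ a = agr φ ψ})

/-- A group is supersolvable if it has a chain of subgroups, each normal in the
whole group, whose consecutive quotients are cyclic (equivalently each step is
obtained from the previous one by adjoining a single generator). -/
def IsSupersolvable (G : Type*) [Group G] : Prop :=
  ∃ (k : ℕ) (s : ℕ → Subgroup G),
    s 0 = ⊥ ∧ s k = ⊤ ∧ (∀ i, (s i).Normal) ∧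
    (∀ i < k, s i ≤ s (i + 1)) ∧
    (∀ i < k, ∃ g : G, s (i + 1) = s i ⊔ Subgroup.zpowers g)

/-- Agreement is unchanged by pulling functions back along the projection of a product onto its
first factor, when the second factor is finite and nonempty. -/
lemma agr_eq_of_prod {A B G H : Type*} [Finite B] [Nonempty B] (e : A × B ≃ G)
    (f g : G → H) (f' g' : A → H) (hf : ∀ a b, f (e (a, b)) = f' a)
    (hg : ∀ a b, g (e (a, b)) = g' a) : agr f g = agr f' g' := by
  have hG : Nat.card G = Nat.card A * Nat.card B := by
    rw [← Nat.card_prod, Nat.card_congr e]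
  have hS : Nat.card {x : G // f x = g x} = Nat.card {a : A // f' a = g' a} * Nat.card B := by
    rw [← Nat.card_prod]
    refine Nat.card_congr (Equiv.symm ?_)
    refine (Equiv.prodSubtypeFstEquivSubtypeProd (p := fun a => f' a = g' a)).symm.trans
      (e.subtypeEquiv ?_)
    rintro ⟨a, b⟩
    rw [hf, hg]
  have hB : (Nat.card B : ℝ) ≠ 0 := by exact_mod_cast Nat.card_pos.ne'
  unfold agr
  rw [hG, hS]
  push_cast
  exact mul_div_mul_right _ _ hB

lemma IsAffineHom.restrict {G H : Type*} [Group G] [Group H] {φ : G → H} (hφ : IsAffineHom φ)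
    (N : Subgroup G) : IsAffineHom (fun n : N => φ n) := by
  obtain ⟨h, φ₀, hφ⟩ := hφ
  exact ⟨h, φ₀.comp N.subtype, fun n => hφ n⟩

lemma IsAffineHom.apply_mul_of_card_hom {G H : Type*} [Group G] [Group H] {φ : G → H}
    (hφ : IsAffineHom φ) (K : Subgroup G) (hhom : Nat.card (K →* H) = 1) (x : G) {y : G}
    (hy : y ∈ K) : φ (x * y) = φ x := by
  obtain ⟨h, φ₀, hφ⟩ := hφ
  have := (Nat.card_eq_one_iff_unique.1 hhom).1
  have h1 : φ₀ y = 1 :=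
    DFunLike.congr_fun (Subsingleton.elim (φ₀.comp K.subtype) 1) (⟨y, hy⟩ : K)
  rw [hφ, hφ, map_mul, h1, mul_one]

lemma agr_le_one {G H : Type*} [Finite G] (f g : G → H) : agr f g ≤ 1 := by
  unfold agr
  refine div_le_one_of_le₀ ?_ (Nat.cast_nonneg _)
  exact_mod_cast Nat.card_le_card_of_injective _ Subtype.val_injective

/-- If `G = N ⋊ G₁` (internal semidirect product) and the
only homomorphism `G₁ → H` is trivial, then `Λ_{G,H} ≤ Λ_{N,H}`. -/
theorem statement7 (G H : Type) [Group G] [Group H] [Fintype G] [Fintype H]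
    (N : Subgroup G) (hN : N.Normal) (G₁ : Subgroup G)
    (hmeet : N ⊓ G₁ = ⊥)
    (hjoin : ∀ g : G, ∃ x ∈ N, ∃ y ∈ G₁, g = x * y)
    (hhom : Nat.card (G₁ →* H) = 1) :
    Lambda G H ≤ Lambda N H := by
  have hbij : Function.Bijective (fun p : N × G₁ => (p.1 : G) * p.2) := by
    refine ⟨Subgroup.mul_injective_of_disjoint (disjoint_iff.2 hmeet), fun g => ?_⟩
    obtain ⟨x, hx, y, hy, rfl⟩ := hjoin g
    exact ⟨(⟨x, hx⟩, ⟨y, hy⟩), rfl⟩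
  have hfac : ∀ φ : G → H, IsAffineHom φ → ∀ (n : N) (y : G₁), φ (n * y) = φ n :=
    fun φ hφ n y => hφ.apply_mul_of_card_hom G₁ hhom n y.2
  refine csSup_le_csSup ⟨1, ?_⟩ (Set.insert_nonempty _ _) (Set.insert_subset_insert ?_)
  · rintro a (rfl | ⟨φ, ψ, -, -, -, rfl⟩)
    · exact zero_le_one
    · exact agr_le_one φ ψ
  · rintro a ⟨φ, ψ, hφ, hψ, hne, rfl⟩
    refine ⟨fun n => φ n, fun n => ψ n, hφ.restrict N, hψ.restrict N, fun heq => hne ?_, ?_⟩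
    · funext g
      obtain ⟨⟨n, y⟩, rfl⟩ := hbij.2 g
      change φ (n * y) = ψ (n * y)
      rw [hfac φ hφ, hfac ψ hψ]
      exact congrFun heq n
    · exact agr_eq_of_prod (Equiv.ofBijective _ hbij) _ _ _ _ (hfac φ hφ) (hfac ψ hψ)
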